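/- Let m, n be nonzero integers with |m| ≠ |n|. Then the Baumslag–Solitar group BS(m,n) does not embed in Thompson's group V: every group homomorphism from BS(m,n) to the permutation group of the Cantor set C = ℕ → Bool whose image consists of prefix replacement maps fails to be injective. -/

import Mathlib

/-- The Cantor set `C = ℕ → Bool`. -/
abbrev Cantor : Type := ℕ → Bool

/-- Prepend a finite word `a` to an element `ξ` of the Cantor set. -/
def prepend (a : List Bool) (ξ : Cantor) : Cantor :=
  fun n => if h : n < a.length then a.get ⟨n, h⟩ else ξ (n - a.length)

/-- A finite set of finite binary words is a complete antichain if distinct elements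
are incomparable in the prefix order and every `ξ : ℕ → Bool` has an initial segment
lying in it. -/
def IsCompleteAntichain (A : Set (List Bool)) : Prop :=
  A.Finite ∧
  (∀ a ∈ A, ∀ b ∈ A, a ≠ b → ¬ a <+: b) ∧
  (∀ ξ : Cantor, ∃ n : ℕ, (List.ofFn fun i : Fin n => ξ i) ∈ A)

/-- A permutation of the Cantor set is a prefix replacement map if it is given by
a bijection between two finite complete antichains of prefixes. -/
def IsPrefixReplacement (g : Equiv.Perm Cantor) : Prop :=
  ∃ A B : Set (List Bool), IsCompleteAntichain A ∧ IsCompleteAntichain B ∧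
    ∃ σ : A ≃ B, ∀ (a : A) (ξ : Cantor), g (prepend a ξ) = prepend (σ a : List Bool) ξ

/-- The single Baumslag–Solitar relator `b⁻¹ aᵐ b (aⁿ)⁻¹` in the free group on two
generators (`0 ↦ a`, `1 ↦ b`). -/
def bsRels (m n : ℤ) : Set (FreeGroup (Fin 2)) :=
  {(FreeGroup.of 1)⁻¹ * (FreeGroup.of 0) ^ m * FreeGroup.of 1 * ((FreeGroup.of 0) ^ n)⁻¹}

/-- The Baumslag–Solitar group `BS(m,n) = ⟨a, b ∣ b⁻¹ aᵐ b = aⁿ⟩`. -/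
abbrev BS (m n : ℤ) : Type := PresentedGroup (bsRels m n)

/-- The generator `a` of `BS(m,n)`. -/
def BS.a (m n : ℤ) : BS m n := PresentedGroup.of 0

/-- The generator `b` of `BS(m,n)`. -/
def BS.b (m n : ℤ) : BS m n := PresentedGroup.of 1

/-!
A prefix replacement map `g` acts near every point `x` by replacing a prefix `u` of `x` by a word
`v`. The integer `|v| - |u|` does not depend on the choice of `u`, satisfies the chain rule and is
locally constant in `x`, so the supremum of its absolute value is a seminorm `ℓ` on `V`. The stable
length `τ g = lim ℓ (g ^ N) / N` is a conjugacy invariant with `τ (g ^ z) = |z| τ g`; hence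
`τ g = 0` as soon as `g ^ m` and `g ^ n` are conjugate with `|m| ≠ |n|`.

On the other hand `τ g > 0` if `g` has infinite order. Indeed, if the length changes of all powers
of `g` are uniformly bounded, then all powers are given by replacing the words of one fixed length
by words of bounded length, so there are only finitely many of them. Otherwise, replacing `g` by
`g⁻¹` if necessary, the length change of `g ^ j` along some orbit attains many new minima. At such a
record time `j`, the power `g ^ j` replaces a suitable prefix of the starting point by a word of a
fixed length `L`. By the pigeonhole principle the same word `v` occurs at two record times, so some
power of `g` replaces `v ++ t` by `v` with `t ≠ []`, and iterating it shows that `τ` is positive.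

Finally, `a` has infinite order in `BS m n`, because `BS m n` acts on `ℚ` by affine maps with `a`
acting as `x ↦ x + 1` and `b` as `x ↦ (m / n) x`.
-/

open Filter Topology

section StableLength

variable {G : Type*} [Group G] (ℓ : GroupSeminorm G)

lemma subadditive_apply_pow (g : G) : Subadditive fun N => ℓ (g ^ N) := fun p q => by
  simpa only [pow_add] using map_mul_le_add ℓ (g ^ p) (g ^ q)

/-- The stable length `lim ℓ (g ^ N) / N` of `g` with respect to a seminorm `ℓ` on a group. -/
noncomputable def stableLength (g : G) : ℝ := (subadditive_apply_pow ℓ g).lim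

lemma tendsto_stableLength (g : G) :
    Tendsto (fun N : ℕ => ℓ (g ^ N) / N) atTop (𝓝 (stableLength ℓ g)) :=
  (subadditive_apply_pow ℓ g).tendsto_lim
    ⟨0, Set.forall_mem_range.2 fun N => div_nonneg (apply_nonneg ℓ _) N.cast_nonneg⟩

lemma le_stableLength {g : G} {c : ℝ} (h : ∀ N : ℕ, N * c ≤ ℓ (g ^ N)) :
    c ≤ stableLength ℓ g := by
  refine ge_of_tendsto (tendsto_stableLength ℓ g) ?_
  filter_upwards [eventually_gt_atTop 0] with N hN
  rw [le_div_iff₀' (Nat.cast_pos.2 hN)]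
  exact h N

lemma stableLength_pow (g : G) (k : ℕ) : stableLength ℓ (g ^ k) = k * stableLength ℓ g := by
  refine tendsto_nhds_unique (tendsto_stableLength ℓ (g ^ k)) ?_
  rcases k.eq_zero_or_pos with rfl | hk
  · simp
  · have hsubseq := (tendsto_stableLength ℓ g).comp (tendsto_id.const_mul_atTop' hk)
    refine (hsubseq.const_mul (k : ℝ)).congr fun N => ?_
    simp only [Function.comp_apply, id_eq, pow_mul, Nat.cast_mul]
    field_simp

lemma stableLength_inv (g : G) : stableLength ℓ g⁻¹ = stableLength ℓ g :=
  tendsto_nhds_unique (tendsto_stableLength ℓ g⁻¹) <| by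
    simpa only [inv_pow, map_inv_eq_map] using tendsto_stableLength ℓ g

lemma stableLength_zpow (g : G) (z : ℤ) : stableLength ℓ (g ^ z) = |z| * stableLength ℓ g := by
  obtain ⟨k, rfl | rfl⟩ := z.eq_nat_or_neg <;> simp [stableLength_pow, stableLength_inv]

lemma stableLength_conj_le (g h : G) : stableLength ℓ (h * g * h⁻¹) ≤ stableLength ℓ g := by
  have hbound (N : ℕ) : ℓ ((h * g * h⁻¹) ^ N) / N ≤ ℓ (g ^ N) / N + 2 * ℓ h / N := by
    rw [conj_pow, ← add_div]
    gcongr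
    calc ℓ (h * g ^ N * h⁻¹) ≤ ℓ h + ℓ (g ^ N) + ℓ h⁻¹ :=
          (map_mul_le_add ℓ _ _).trans (by gcongr; exact map_mul_le_add ℓ _ _)
      _ = ℓ (g ^ N) + 2 * ℓ h := by rw [map_inv_eq_map]; ring
  refine le_of_tendsto_of_tendsto' (tendsto_stableLength ℓ _) ?_ hbound
  simpa using (tendsto_stableLength ℓ g).add (tendsto_const_div_atTop_nhds_zero_nat (2 * ℓ h))

lemma stableLength_eq_of_isConj {g h : G} (hgh : IsConj g h) :
    stableLength ℓ g = stableLength ℓ h := by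
  have hle {g h : G} (hgh : IsConj g h) : stableLength ℓ h ≤ stableLength ℓ g := by
    obtain ⟨c, rfl⟩ := isConj_iff.1 hgh
    exact stableLength_conj_le ℓ g c
  exact le_antisymm (hle hgh.symm) (hle hgh)

lemma stableLength_eq_zero_of_isConj_zpow {g : G} {m n : ℤ} (hmn : |m| ≠ |n|)
    (h : IsConj (g ^ m) (g ^ n)) : stableLength ℓ g = 0 := by
  have heq : (|m| : ℝ) * stableLength ℓ g = |n| * stableLength ℓ g := by
    simpa only [stableLength_zpow, Int.cast_abs] using stableLength_eq_of_isConj ℓ h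
  by_contra hne
  exact hmn (by exact_mod_cast mul_right_cancel₀ hne heq)

end StableLength

section Records

/-- `n` is a strict lower record time of the sequence `s`. -/
def IsRecord {α : Type*} [LT α] (s : ℕ → α) (n : ℕ) : Prop := ∀ i < n, s n < s i

open Classical in
lemma sub_count_isRecord_nsmul_le {α : Type*} [AddCommGroup α] [LinearOrder α]
    [IsOrderedAddMonoid α] {s : ℕ → α} {c : α} (hc : 0 ≤ c) (h : ∀ n, s n - c ≤ s (n + 1))
    (n : ℕ) : s 0 - Nat.count (IsRecord s) (n + 1) • c ≤ s n := by
  induction n using Nat.strong_induction_on with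
  | _ n ih =>
    by_cases hn : IsRecord s n
    · rcases n with _ | n
      · exact sub_le_self _ (nsmul_nonneg hc _)
      · calc s 0 - Nat.count (IsRecord s) (n + 1 + 1) • c
            = s 0 - Nat.count (IsRecord s) (n + 1) • c - c := by
              rw [Nat.count_succ, if_pos hn, succ_nsmul, sub_sub]
          _ ≤ s n - c := sub_le_sub_right (ih n n.lt_succ_self) c
          _ ≤ s (n + 1) := h n
    · obtain ⟨i, hi, hle⟩ : ∃ i < n, s i ≤ s n := by simpa [IsRecord] using hn
      calc s 0 - Nat.count (IsRecord s) (n + 1) • c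
          ≤ s 0 - Nat.count (IsRecord s) (i + 1) • c := by
            gcongr
        _ ≤ s i := ih i hi
        _ ≤ s n := hle

end Records

namespace Cantor

/-- The initial segment of length `n` of a point of the Cantor set, in the form in which it occurs
in `IsCompleteAntichain`. -/
def take (n : ℕ) (x : Cantor) : List Bool := List.ofFn fun i : Fin n => x i

@[simp] lemma length_take (n : ℕ) (x : Cantor) : (take n x).length = n := List.length_ofFn

lemma take_prefix_take {k n : ℕ} (h : k ≤ n) (x : Cantor) : take k x <+: take n x := by
  rw [List.prefix_iff_getElem]
  simp [take, h]

@[simp] lemma take_length_prepend (u : List Bool) (ξ : Cantor) :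
    take u.length (prepend u ξ) = u :=
  List.ext_getElem (by simp) (by simp [take, prepend])

lemma exists_prepend_take (n : ℕ) (x : Cantor) : ∃ ξ, prepend (take n x) ξ = x :=
  ⟨fun i => x (i + n), by grind [prepend, take]⟩

lemma isLocallyConstant_take (n : ℕ) : IsLocallyConstant (take n) :=
  IsLocallyConstant.comp (f := fun (x : Cantor) (i : Fin n) => x i)
    ((IsLocallyConstant.iff_continuous _).2 (by fun_prop)) List.ofFn

end Cantor

open Cantor

lemma prepend_append (u v : List Bool) (ξ : Cantor) :
    prepend (u ++ v) ξ = prepend u (prepend v ξ) := by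
  grind [prepend]

lemma prepend_injective : Function.Injective prepend := by
  have hlen {v w : List Bool} (h : prepend v = prepend w) : w.length ≤ v.length := by
    by_contra! hlt
    have := congrFun (congrFun h fun _ => true) v.length
    have := congrFun (congrFun h fun _ => false) v.length
    simp_all [prepend]
  intro v w h
  rw [← take_length_prepend v fun _ => false, h, le_antisymm (hlen h.symm) (hlen h),
    take_length_prepend]

section Replaces

/-- `g` maps the cone of `u` onto the cone of `v` by replacing the prefix `u` by `v`. -/
def Replaces (g : Equiv.Perm Cantor) (u v : List Bool) : Prop :=
  ∀ ξ, g (prepend u ξ) = prepend v ξ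

namespace Replaces

variable {g h : Equiv.Perm Cantor} {u v w : List Bool}

lemma one (u : List Bool) : Replaces 1 u u := fun _ => rfl

lemma mul (hg : Replaces g v w) (hh : Replaces h u v) : Replaces (g * h) u w := fun ξ => by
  rw [Equiv.Perm.mul_apply, hh, hg]

lemma inv (hg : Replaces g u v) : Replaces g⁻¹ v u := fun ξ => by
  rw [← hg, Equiv.Perm.inv_def, Equiv.symm_apply_apply]

lemma append (hg : Replaces g u v) (t : List Bool) : Replaces g (u ++ t) (v ++ t) := fun ξ => by
  rw [prepend_append, prepend_append, hg]

lemma exists_of_prefix (hg : Replaces g u v) (huw : u <+: w) :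
    ∃ z, Replaces g w z ∧ z.length + u.length = v.length + w.length := by
  obtain ⟨t, rfl⟩ := huw
  exact ⟨v ++ t, hg.append t, by simp only [List.length_append]; omega⟩

lemma unique (hv : Replaces g u v) (hw : Replaces g u w) : v = w :=
  prepend_injective <| funext fun ξ => by rw [← hv, ← hw]

lemma take_length_eq {n : ℕ} {x : Cantor} (hg : Replaces g (take n x) v) :
    take v.length (g x) = v := by
  obtain ⟨ξ, hξ⟩ := exists_prepend_take n x
  rw [← hξ, hg, take_length_prepend]

lemma exists_comp {k n : ℕ} {x : Cantor} (hg : Replaces g (take n (h x)) w)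
    (hh : Replaces h (take k x) v) :
    ∃ l v' w', Replaces h (take l x) v' ∧ Replaces g v' w' := by
  obtain ⟨v', hv', hlen⟩ := hh.exists_of_prefix (take_prefix_take (Nat.le_add_right k n) x)
  have hn : n ≤ v'.length := by
    simp only [length_take] at hlen
    omega
  obtain ⟨w', hw', -⟩ := hg.exists_of_prefix (take_prefix_take hn (h x))
  exact ⟨k + n, v', w', hv', hv'.take_length_eq ▸ hw'⟩

end Replaces

end Replaces

section ThompsonV

/-- Thompson's group `V`, encoded as the group of permutations that act by replacing a prefix near
each point. By compactness of the Cantor set these are the prefix replacement maps. -/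
def thompsonV : Subgroup (Equiv.Perm Cantor) where
  carrier := {g | ∀ x, ∃ n v, Replaces g (take n x) v}
  one_mem' x := ⟨0, _, .one _⟩
  mul_mem' {g h} hg hh x := by
    obtain ⟨k, v, hv⟩ := hh x
    obtain ⟨n, w, hw⟩ := hg (h x)
    obtain ⟨l, v', w', hv', hw'⟩ := hw.exists_comp hv
    exact ⟨l, w', hw'.mul hv'⟩
  inv_mem' {g} hg x := by
    obtain ⟨n, v, hv⟩ := hg (g⁻¹ x)
    have htake : take v.length x = v := by simpa using hv.take_length_eq
    exact ⟨v.length, take n (g⁻¹ x), htake.symm ▸ hv.inv⟩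

lemma IsPrefixReplacement.mem_thompsonV {g : Equiv.Perm Cantor} (hg : IsPrefixReplacement g) :
    g ∈ thompsonV := by
  obtain ⟨A, B, ⟨-, -, hcover⟩, -, σ, hσ⟩ := hg
  intro x
  obtain ⟨n, hn⟩ := hcover x
  exact ⟨n, σ ⟨_, hn⟩, hσ ⟨_, hn⟩⟩

lemma exists_replaces_of_le_length {g : Equiv.Perm Cantor} (hg : g ∈ thompsonV) :
    ∃ L, ∀ u : List Bool, L ≤ u.length → ∃ v, Replaces g u v := by
  let U (n : ℕ) : Set Cantor := take n ⁻¹' {u | ∃ v, Replaces g u v}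
  have hU_mono : Monotone U := fun m n hmn x ⟨v, hv⟩ =>
    (hv.exists_of_prefix (take_prefix_take hmn x)).imp fun _ => And.left
  obtain ⟨L, hL⟩ := isCompact_univ.elim_directed_cover U (fun n => isLocallyConstant_take n _)
    (fun x _ => Set.mem_iUnion.2 (hg x)) hU_mono.directed_le
  refine ⟨L, fun u hu => ?_⟩
  simpa only [U, Set.mem_preimage, take_length_prepend, Set.mem_ofPred_eq] using
    hU_mono hu (hL (Set.mem_univ (prepend u fun _ => false)))

end ThompsonV

section LengthChange

/-- The change in length of a prefix of `x` under the prefix replacement by which `g` acts near `x`,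
a logarithmic derivative of `g` at `x`. The prefix is chosen arbitrarily:
see `Replaces.lengthChange_eq`. -/
noncomputable def lengthChange (g : thompsonV) (x : Cantor) : ℤ :=
  (g.2 x).choose_spec.choose.length - (g.2 x).choose

lemma Replaces.lengthChange_eq {g : thompsonV} {n : ℕ} {x : Cantor} {v : List Bool}
    (h : Replaces g (take n x) v) : lengthChange g x = v.length - n := by
  have key {k l : ℕ} {v w : List Bool} (hkl : k ≤ l) (hv : Replaces g (take k x) v)
      (hw : Replaces g (take l x) w) : (v.length : ℤ) - k = w.length - l := by
    obtain ⟨z, hz, hlen⟩ := hv.exists_of_prefix (take_prefix_take hkl x)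
    rw [hw.unique hz]
    simp only [length_take] at hlen
    omega
  have hchoose := (g.2 x).choose_spec.choose_spec
  rcases le_total (g.2 x).choose n with hn | hn
  · exact key hn hchoose h
  · exact (key hn h hchoose).symm

@[simp] lemma lengthChange_one (x : Cantor) : lengthChange 1 x = 0 := by
  simp [(Replaces.one (take 0 x)).lengthChange_eq (g := 1)]

lemma lengthChange_mul (g h : thompsonV) (x : Cantor) :
    lengthChange (g * h) x = lengthChange g (h.1 x) + lengthChange h x := by
  obtain ⟨k, v, hv⟩ := h.2 x
  obtain ⟨n, w, hw⟩ := g.2 (h.1 x)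
  obtain ⟨l, v', w', hv', hw'⟩ := hw.exists_comp hv
  have hgh := (hw'.mul hv').lengthChange_eq (g := g * h)
  rw [← hv'.take_length_eq] at hw'
  rw [hgh, hw'.lengthChange_eq, hv'.lengthChange_eq]
  ring

lemma lengthChange_inv (g : thompsonV) (x : Cantor) :
    lengthChange g⁻¹ x = -lengthChange g (g.1⁻¹ x) := by
  have := lengthChange_mul g g⁻¹ x
  rw [mul_inv_cancel, lengthChange_one] at this
  exact (neg_eq_of_add_eq_zero_right this.symm).symm

lemma isLocallyConstant_lengthChange (g : thompsonV) : IsLocallyConstant (lengthChange g) := by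
  rw [IsLocallyConstant.iff_eventually_eq]
  intro x
  obtain ⟨n, v, hv⟩ := g.2 x
  filter_upwards [(isLocallyConstant_take n).eventually_eq x] with y hy
  rw [hv.lengthChange_eq, (hy ▸ hv : Replaces g (take n y) v).lengthChange_eq]

lemma bddAbove_range_abs_lengthChange (g : thompsonV) :
    BddAbove (Set.range fun x => |(lengthChange g x : ℝ)|) :=
  ((isLocallyConstant_lengthChange g).comp fun z => |(z : ℝ)|).range_finite.bddAbove

/-- The supremum of `|lengthChange g x|` over all points `x`, as a seminorm on `V`. -/
noncomputable def stretch : GroupSeminorm thompsonV where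
  toFun g := ⨆ x, |(lengthChange g x : ℝ)|
  map_one' := by simp
  mul_le' g h := ciSup_le fun x => by
    rw [lengthChange_mul, Int.cast_add]
    exact (abs_add_le _ _).trans <| add_le_add
      (le_ciSup (bddAbove_range_abs_lengthChange g) _)
      (le_ciSup (bddAbove_range_abs_lengthChange h) _)
  inv' g := by
    simp only [lengthChange_inv, Int.cast_neg, abs_neg]
    exact g.1⁻¹.iSup_comp (g := fun x => |(lengthChange g x : ℝ)|)

lemma abs_lengthChange_le_stretch (g : thompsonV) (x : Cantor) :
    |(lengthChange g x : ℝ)| ≤ stretch g :=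
  le_ciSup (bddAbove_range_abs_lengthChange g) x

end LengthChange

section Powers

lemma exists_replaces_pow {g : thompsonV} {L : ℕ}
    (hL : ∀ u : List Bool, L ≤ u.length → ∃ v, Replaces g u v) {x : Cantor} {l N : ℕ}
    (h : ∀ j < N, (L : ℤ) ≤ l + lengthChange (g ^ j) x) :
    ∃ v, Replaces ↑(g ^ N) (take l x) v := by
  induction N with
  | zero => exact ⟨take l x, .one _⟩
  | succ N ih =>
    obtain ⟨v, hv⟩ := ih fun j hj => h j (hj.trans N.lt_succ_self)
    have hlen : L ≤ v.length := by
      have := h N N.lt_succ_self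
      rw [hv.lengthChange_eq] at this
      omega
    obtain ⟨w, hw⟩ := hL v hlen
    exact ⟨w, pow_succ' g N ▸ hw.mul hv⟩

lemma finite_setOf_replaces (n B : ℕ) :
    {g : Equiv.Perm Cantor |
      ∀ u : List Bool, u.length = n → ∃ v, v.length ≤ B ∧ Replaces g u v}.Finite := by
  have : Finite {w : List Bool // w.length ≤ B} := (List.finite_length_le Bool B).to_subtype
  rw [← Set.finite_coe_iff]
  choose F hFB hF using fun g : {g : Equiv.Perm Cantor |
    ∀ u : List Bool, u.length = n → ∃ v, v.length ≤ B ∧ Replaces g u v} => g.2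
  refine Finite.of_injective (β := List.Vector Bool n → {w : List Bool // w.length ≤ B})
    (fun g u => ⟨F g u.1 u.2, hFB g u.1 u.2⟩) fun g h hgh => Subtype.ext (Equiv.ext fun x => ?_)
  have hword : F g (take n x) (length_take n x) = F h (take n x) (length_take n x) :=
    congrArg Subtype.val (congrFun hgh ⟨take n x, length_take n x⟩)
  obtain ⟨ξ, hξ⟩ := exists_prepend_take n x
  rw [← hξ, hF g _ (length_take n x), hF h _ (length_take n x), hword]

lemma isOfFinOrder_of_abs_lengthChange_pow_le {g : thompsonV} {K : ℕ}
    (hK : ∀ N x, |lengthChange (g ^ N) x| ≤ K) : IsOfFinOrder g := by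
  obtain ⟨L, hL⟩ := exists_replaces_of_le_length g.2
  rw [← finite_powers]
  refine ((finite_setOf_replaces (L + K) (L + 2 * K)).preimage
    Subtype.val_injective.injOn).subset ?_
  rintro _ ⟨N, rfl⟩ u hu
  obtain ⟨v, hv⟩ := exists_replaces_pow hL (x := prepend u fun _ => false) (l := L + K) (N := N)
    fun j _ => by have := (abs_le.1 (hK j (prepend u fun _ => false))).1; push_cast; linarith
  have hlen := (abs_le.1 (hK N (prepend u fun _ => false))).2
  rw [hv.lengthChange_eq] at hlen
  rw [← hu, take_length_prepend] at hv
  exact ⟨v, by push_cast at hlen; omega, hv⟩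

end Powers

section Expanding

/-- `g` is expanding if it maps some cone onto a strictly larger cone by deleting part of the
prefix. -/
def IsExpanding (g : Equiv.Perm Cantor) : Prop :=
  ∃ v t : List Bool, t ≠ [] ∧ Replaces g (v ++ t) v

lemma IsExpanding.one_le_stableLength {g : thompsonV} (hg : IsExpanding g) :
    1 ≤ stableLength stretch g := by
  obtain ⟨v, t, ht, hvt⟩ := hg
  have hpow (N : ℕ) : ∃ s : List Bool, N ≤ s.length ∧ Replaces ↑(g ^ N) (v ++ s) v := by
    induction N with
    | zero => exact ⟨[], le_rfl, by simpa using Replaces.one v⟩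
    | succ N ih =>
      obtain ⟨s, hs, hvs⟩ := ih
      refine ⟨t ++ s, ?_, ?_⟩
      · grind [List.length_pos_iff]
      · rw [pow_succ, ← List.append_assoc]
        exact hvs.mul (hvt.append s)
  refine le_stableLength stretch fun N => ?_
  obtain ⟨s, hs, hvs⟩ := hpow N
  rw [← take_length_prepend (v ++ s) fun _ => false] at hvs
  calc (N * 1 : ℝ) ≤ s.length := by rw [mul_one]; exact_mod_cast hs
    _ = |(lengthChange (g ^ N) (prepend (v ++ s) fun _ => false) : ℝ)| := by
      simp [hvs.lengthChange_eq]
    _ ≤ stretch (g ^ N) := abs_lengthChange_le_stretch _ _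

/-- At a record time `N` of the orbit, `g ^ N` replaces a prefix of `x` by a word of length exactly
`L`: all earlier images of that prefix are longer. -/
lemma IsRecord.replaces_pow {g : thompsonV} {L : ℕ}
    (hL : ∀ u : List Bool, L ≤ u.length → ∃ v, Replaces g u v) {x : Cantor} {N : ℕ}
    (hN : IsRecord (fun j => lengthChange (g ^ j) x) N) :
    Replaces ↑(g ^ N) (take (L - lengthChange (g ^ N) x).toNat x) (take L ((g ^ N).1 x)) := by
  have hnonpos : lengthChange (g ^ N) x ≤ 0 := by
    rcases N.eq_zero_or_pos with rfl | hpos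
    · simp
    · simpa using (hN 0 hpos).le
  have hl : ((L - lengthChange (g ^ N) x).toNat : ℤ) = L - lengthChange (g ^ N) x :=
    Int.toNat_of_nonneg (by omega)
  obtain ⟨v, hv⟩ := exists_replaces_pow hL (x := x) (N := N) fun j hj => by
    have : lengthChange (g ^ N) x < lengthChange (g ^ j) x := hN j hj
    rw [hl]
    omega
  have hvL : v.length = L := by
    have := hv.lengthChange_eq
    omega
  rwa [← hvL, hv.take_length_eq, hvL]

lemma isExpanding_of_isRecord {g : thompsonV} {L : ℕ}
    (hL : ∀ u : List Bool, L ≤ u.length → ∃ v, Replaces g u v) {x : Cantor} {i j : ℕ} (hij : i < j)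
    (hi : IsRecord (fun k => lengthChange (g ^ k) x) i)
    (hj : IsRecord (fun k => lengthChange (g ^ k) x) j)
    (htake : take L ((g ^ i).1 x) = take L ((g ^ j).1 x)) :
    IsExpanding ↑(g ^ (j - i : ℤ)) := by
  have hlt : lengthChange (g ^ j) x < lengthChange (g ^ i) x := hj i hij
  have hri := hi.replaces_pow hL
  have hrj := hj.replaces_pow hL
  have hlij : (L - lengthChange (g ^ i) x).toNat < (L - lengthChange (g ^ j) x).toNat := by
    have := hri.lengthChange_eq
    have := hrj.lengthChange_eq
    rw [length_take] at *
    omega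
  obtain ⟨t, ht⟩ := take_prefix_take hlij.le x
  refine ⟨take L ((g ^ i).1 x), t, ?_, ?_⟩
  · rintro rfl
    simpa [hlij.ne] using congrArg List.length ht
  · rw [zpow_natCast_sub_natCast, div_eq_mul_inv]
    rw [← ht, ← htake] at hrj
    exact hrj.mul (hri.append t).inv

open Classical in
lemma count_isRecord_le {g : thompsonV} {L : ℕ}
    (hL : ∀ u : List Bool, L ≤ u.length → ∃ v, Replaces g u v)
    (hg : ∀ z : ℤ, ¬ IsExpanding ↑(g ^ z)) (x : Cantor) (N : ℕ) :
    Nat.count (IsRecord fun j => lengthChange (g ^ j) x) N ≤ 2 ^ L := by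
  set s : ℕ → ℤ := fun j => lengthChange (g ^ j) x
  have hinj : Set.InjOn (fun j (k : Fin L) => (g ^ j).1 x k) {j | IsRecord s j} := by
    intro i hi j hj hij
    have htake : take L ((g ^ i).1 x) = take L ((g ^ j).1 x) := congrArg List.ofFn hij
    rcases lt_trichotomy i j with h | h | h
    · exact absurd (isExpanding_of_isRecord hL h hi hj htake) (hg _)
    · exact h
    · exact absurd (isExpanding_of_isRecord hL h hj hi htake.symm) (hg _)
  rw [Nat.count_eq_card_filter_range]
  simpa using Finset.card_le_card_of_injOn _ (fun _ _ => Finset.mem_univ _)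
    (hinj.mono fun j hj => (Finset.mem_filter.1 hj).2)

lemma exists_neg_le_lengthChange_pow {g : thompsonV} (hg : ∀ z : ℤ, ¬ IsExpanding ↑(g ^ z)) :
    ∃ K : ℕ, ∀ N x, -(K : ℤ) ≤ lengthChange (g ^ N) x := by
  classical
  obtain ⟨L, hL⟩ := exists_replaces_of_le_length g.2
  set C := ⌈stretch g⌉₊
  refine ⟨2 ^ L * C, fun N x => ?_⟩
  set s : ℕ → ℤ := fun j => lengthChange (g ^ j) x
  have hstep (n : ℕ) : s n - C ≤ s (n + 1) := by
    have hC : |lengthChange g ((g ^ n).1 x)| ≤ C := by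
      exact_mod_cast (abs_lengthChange_le_stretch g _).trans (Nat.le_ceil _)
    simp only [s, pow_succ', lengthChange_mul]
    linarith [(abs_le.1 hC).1]
  calc -((2 ^ L * C : ℕ) : ℤ) = s 0 - 2 ^ L • (C : ℤ) := by simp [s]
    _ ≤ s 0 - Nat.count (IsRecord s) (N + 1) • (C : ℤ) := by
      gcongr
      exact count_isRecord_le hL hg x (N + 1)
    _ ≤ s N := sub_count_isRecord_nsmul_le (Nat.cast_nonneg C) hstep N

lemma exists_isExpanding_zpow {g : thompsonV} (hg : ¬ IsOfFinOrder g) :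
    ∃ z : ℤ, IsExpanding ↑(g ^ z) := by
  by_contra! hexp
  obtain ⟨K, hK⟩ := exists_neg_le_lengthChange_pow hexp
  obtain ⟨K', hK'⟩ := exists_neg_le_lengthChange_pow (g := g⁻¹) fun z => by
    simpa only [inv_zpow'] using hexp (-z)
  refine hg (isOfFinOrder_of_abs_lengthChange_pow_le (K := max K K') fun N x => abs_le.2 ?_)
  have hlower := hK N x
  have hupper := hK' N ((g ^ N).1 x)
  rw [inv_pow, lengthChange_inv, Equiv.Perm.inv_def, Equiv.symm_apply_apply] at hupper
  push_cast
  constructor <;> omega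

lemma stableLength_stretch_pos {g : thompsonV} (hg : ¬ IsOfFinOrder g) :
    0 < stableLength stretch g := by
  obtain ⟨z, hz⟩ := exists_isExpanding_zpow hg
  have hone := hz.one_le_stableLength
  rw [stableLength_zpow] at hone
  exact pos_of_mul_pos_right (one_pos.trans_le hone) (by positivity)

theorem isOfFinOrder_of_isConj_zpow {g : thompsonV} {m n : ℤ} (hmn : |m| ≠ |n|)
    (h : IsConj (g ^ m) (g ^ n)) : IsOfFinOrder g := by
  by_contra hg
  exact (stableLength_stretch_pos hg).ne' (stableLength_eq_zero_of_isConj_zpow stretch hmn h)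

end Expanding

namespace BS

lemma isConj_a_zpow (m n : ℤ) : IsConj (a m n ^ m) (a m n ^ n) := by
  have h := PresentedGroup.one_of_mem (rels := bsRels m n) rfl
  simp only [map_mul, map_inv, map_zpow] at h
  exact isConj_iff.2 ⟨(b m n)⁻¹, by rw [inv_inv]; exact mul_inv_eq_one.1 h⟩

lemma exists_monoidHom_apply_a_eq {G : Type*} [Group G] {m n : ℤ} {α β : G}
    (h : β⁻¹ * α ^ m * β = α ^ n) : ∃ f : BS m n →* G, f (a m n) = α := by
  have hrel : ∀ r ∈ bsRels m n, FreeGroup.lift ![α, β] r = 1 := by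
    rintro _ rfl
    simpa [mul_inv_eq_one] using h
  exact ⟨PresentedGroup.toGroup hrel, PresentedGroup.toGroup.of hrel⟩

lemma not_isOfFinOrder_a {m n : ℤ} (hm : m ≠ 0) (hn : n ≠ 0) : ¬ IsOfFinOrder (a m n) := by
  have hm' : (m : ℚ) ≠ 0 := Int.cast_ne_zero.2 hm
  have hn' : (n : ℚ) ≠ 0 := Int.cast_ne_zero.2 hn
  let α := AffineEquiv.constVAdd ℚ ℚ (1 : ℚ)
  let β := AffineEquiv.homothetyUnitsMulHom (0 : ℚ) (Units.mk0 (m / n : ℚ) (div_ne_zero hm' hn'))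
  have hpow (z : ℤ) (x : ℚ) : (α ^ z) x = z + x := by
    simp [α, ← AffineEquiv.constVAdd_zsmul]
  obtain ⟨f, hf⟩ := exists_monoidHom_apply_a_eq (m := m) (n := n) (α := α) (β := β) <| by
    rw [mul_assoc, inv_mul_eq_iff_eq_mul]
    ext x
    simp only [AffineEquiv.mul_def, AffineEquiv.trans_apply, hpow, β,
      AffineEquiv.coe_homothetyUnitsMulHom_apply, Units.val_mk0, AffineMap.homothety_apply,
      vsub_eq_sub, vadd_eq_add, smul_eq_mul, sub_zero, add_zero]
    field_simp
  intro hfin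
  obtain ⟨N, hN, hαN⟩ := isOfFinOrder_iff_pow_eq_one.1 (hf ▸ f.isOfFinOrder hfin)
  have hzero : (N : ℚ) = 0 := by simpa [hαN] using (hpow N 0).symm
  exact hN.ne' (Nat.cast_eq_zero.1 hzero)

end BS

/-- If `|m| ≠ |n|` (with `m, n` nonzero), then `BS(m,n)` does not embed in Thompson's
group `V`: every homomorphism from `BS(m,n)` to the permutation group of the Cantor
set whose image consists of prefix replacement maps fails to be injective. -/
theorem BS_not_embed_in_V (m n : ℤ) (hm : m ≠ 0) (hn : n ≠ 0) (hmn : |m| ≠ |n|)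
    (φ : BS m n →* Equiv.Perm Cantor)
    (hφ : ∀ x : BS m n, IsPrefixReplacement (φ x)) :
    ¬ Function.Injective φ := by
  intro hinj
  let ψ : BS m n →* thompsonV := φ.codRestrict thompsonV fun x => (hφ x).mem_thompsonV
  have hψ : Function.Injective ψ := fun x y h => hinj (congrArg Subtype.val h)
  have hconj : IsConj (ψ (BS.a m n) ^ m) (ψ (BS.a m n) ^ n) := by
    simpa only [map_zpow] using ψ.map_isConj (BS.isConj_a_zpow m n)
  have hfin : IsOfFinOrder (ψ (BS.a m n)) := isOfFinOrder_of_isConj_zpow hmn hconj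
  exact BS.not_isOfFinOrder_a hm hn (hψ.isOfFinOrder_iff.1 hfin)
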